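/- Let m, n ≥ 1 with |s_n| ≤ m < |s_{n+1}|, and suppose m does not belong to any of the sets 𝒟_1(n) := { r·|s_n| : 1 ≤ r ≤ d_{n+1} }, 𝒟_i(n) := { |s_n^r s_{n-1}^{d_n} s_{n-2}^{d_{n-1}} ⋯ s_{n+2-i}^{d_{n+3-i}} s_{n+1-i}| : 1 ≤ r ≤ d_{n+1} } for 2 ≤ i ≤ k-1, and 𝒟_k(n) := { |s_n^r s_{n-1}^{d_n} ⋯ s_{n+2-k}^{d_{n+3-k}} s_{n+1-k}| : 1 ≤ r ≤ d_{n+1} - 1 }. Then for every integer l ≥ 2 there is no word w of length m such that w^l is a factor of 𝐬. -/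

import Mathlib

/-!
Write `c = a_{n+1}` and let `ψ_c` be the elementary morphism fixing `c` and sending every other
letter `b` to `cb`. The word `s_N` is the image of the letter `a_{N+1}` under
`ψ_{a_1}^{d_1} ⋯ ψ_{a_N}^{d_N}`; write `μ_n` for the composition of the first `n` blocks. Then
`s_n = μ_n(c)`, and the lengths in `𝒟_1(n), …, 𝒟_k(n)` are those of `μ_n(c^r)` and `μ_n(c^r b)`
with `b ≠ c` (`stg_letters`), so it suffices to show that a square `ww` with
`|s_n| ≤ |w| < |s_{n+1}|` has such a length (`square_length`).

To see this, the square is desubstituted one elementary morphism at a time. A factor `vy` with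
period `|v|` (that is, `y` is a prefix of `vy`) and `y ≠ []` of a word `ψ_c(x)` extends, with the
same period, by at most one `c` on each side to a word `ψ_c(v'y')c`, where `v'y'` is a factor of `x`
with period `|v'|` (`psi_desubst`). Giving each letter the length of its image as weight, the weight
of `v` stays equal to `m = |w|`, while the weight of `y` decreases at most by the weight of the
single letter `c`. These losses add up to `P_n = ∑ d_i |s_{i-1}|` at level `n`, and the process can
stop (with `y = []`) only when the accumulated loss is at least `m`. The inequality
`P_n < |s_n| + |μ_n(b)|`, valid for every letter `b` (`pl_lt`), excludes this before level `n`. If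
the process stops between levels `n` and `n + 1`, the same inequality makes `v` too light to contain
two letters other than `c` (`light_word`), so that `m` has the required form. If it reaches level
`n + 1`, then `v` cannot contain the separating letter `a_{n+2}`, which has weight `|s_{n+1}| > m`;
hence `v` is a single letter `b ≠ a_{n+2}`, and `m` is `|μ_n(c)|` or `|μ_n(c^{d_{n+1}} b)|`.
-/

namespace Epi

variable {α : Type*}

/-- `pw w p` is the `p`-fold concatenation `w^p`. -/
def pw (w : List α) : ℕ → List α
  | 0 => []
  | p + 1 => w ++ pw w p

/-- `S k a d m` is the word `s_{m-(k-1)}` of the paper (shifted indexing: `m : ℕ`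
ranges over the indices `n ≥ 1-k`). -/
def S (k : ℕ) (a : ℕ → α) (d : ℕ → ℕ) : ℕ → List α
  | m =>
    if h : m < max k 1 then [a ((m + 1) % k + 1)]
    else
      ((List.range (k - 1)).map
          (fun j => pw (S k a d (m - 1 - j)) (d (m + 1 - k - j)))).flatten ++
        S k a d (m - max k 1)
  termination_by m => m
  decreasing_by all_goals omega

/-- `s k a d n` is the word `s_n`, for `n ≥ 0`. -/
def s (k : ℕ) (a : ℕ → α) (d : ℕ → ℕ) (n : ℕ) : List α :=
  S k a d (n + (k - 1))

/-- `D k a d n` is the word `D_n = s_n^{d_{n+1}-1} s_{n-1}^{d_n} ⋯ s_1^{d_2} s_0^{d_1}`. -/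
def D (k : ℕ) (a : ℕ → α) (d : ℕ → ℕ) (n : ℕ) : List α :=
  pw (s k a d n) (d (n + 1) - 1) ++
    ((List.range n).map (fun j => pw (s k a d (n - 1 - j)) (d (n - j)))).flatten

/-- `G k a d n r` is the word `G_{n,r}`: `s_n` with its prefix of length `|D_{n-r}|` removed. -/
def G (k : ℕ) (a : ℕ → α) (d : ℕ → ℕ) (n r : ℕ) : List α :=
  (s k a d n).drop (D k a d (n - r)).length

/-- `Om k a d n r` is the set `Ω_n^r` of singular `n`-words of the `r`-th kind. -/
def Om (k : ℕ) (a : ℕ → α) (d : ℕ → ℕ) (n r : ℕ) : Set (List α) :=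
  { w | w.length = (s k a d n).length ∧
      w <:+:
        ((((G k a d n r).reverse ++ D k a d (n - r) ++ G k a d n r).drop 1).dropLast) }

/-- `w` is a factor of the infinite word `𝐬`. -/
def FactorS (k : ℕ) (a : ℕ → α) (d : ℕ → ℕ) (w : List α) : Prop :=
  ∃ N, w <:+: s k a d N

/-! ### The elementary morphisms -/

open Classical in
/-- The elementary episturmian morphism `ψ_c`: it fixes `c` and sends every other letter `b`
to `cb`. -/
noncomputable def psi (c : α) (x : List α) : List α :=
  x.flatMap (fun b => if b = c then [c] else [c, b])

@[simp] lemma psi_nil (c : α) : psi c [] = [] := rfl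

lemma psi_append (c : α) (x y : List α) : psi c (x ++ y) = psi c x ++ psi c y := by
  simp [psi]

lemma psi_cons_self (c : α) (x : List α) : psi c (c :: x) = c :: psi c x := by
  simp [psi]

lemma psi_cons_ne {c b : α} (h : b ≠ c) (x : List α) : psi c (b :: x) = c :: b :: psi c x := by
  simp [psi, h]

lemma psi_head (c : α) (x : List α) : ∃ t, psi c x ++ [c] = c :: t := by
  cases x with
  | nil => exact ⟨[], rfl⟩
  | cons b x =>
    by_cases h : b = c
    · subst h; exact ⟨_, by rw [psi_cons_self]; rfl⟩
    · exact ⟨_, by rw [psi_cons_ne h]; rfl⟩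

lemma psi_injective (c : α) : Function.Injective (psi c) := by
  intro x
  induction x with
  | nil =>
    intro y h
    cases y with
    | nil => rfl
    | cons b y =>
      by_cases hb : b = c
      · subst hb; simp [psi_cons_self] at h
      · simp [psi_cons_ne hb] at h
  | cons b x ih =>
    intro y h
    have key : ∀ (u v : List α) (e : α), e ≠ c → c :: psi c u = c :: e :: psi c v → False := by
      intro u v e he h
      obtain ⟨t, ht⟩ := psi_head c u
      have h1 : psi c u ++ [c] = e :: (psi c v ++ [c]) := by
        rw [(List.cons.inj h).2]; rfl
      rw [ht] at h1
      exact he (List.cons.inj h1).1.symm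
    cases y with
    | nil =>
      by_cases hb : b = c
      · subst hb; simp [psi_cons_self] at h
      · simp [psi_cons_ne hb] at h
    | cons e y =>
      by_cases hb : b = c
      · subst hb
        by_cases he : e = b
        · subst he
          simp only [psi_cons_self, List.cons.injEq, true_and] at h
          rw [ih h]
        · rw [psi_cons_self, psi_cons_ne he] at h
          exact (key _ _ _ he h).elim
      · by_cases he : e = c
        · subst he
          rw [psi_cons_self, psi_cons_ne hb] at h
          exact (key _ _ _ hb h.symm).elim
        · rw [psi_cons_ne he, psi_cons_ne hb] at h
          simp only [List.cons.injEq, true_and] at h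
          rw [h.1, ih h.2]

/-- Synchronisation: a cut of `ψ_c(x)c` directly before an occurrence of `c` comes from a cut
of `x`. -/
lemma psi_cut (c : α) (x : List α) : ∀ u w : List α, u ++ c :: w = psi c x ++ [c] →
    ∃ x₁ x₂, x = x₁ ++ x₂ ∧ u = psi c x₁ ∧ c :: w = psi c x₂ ++ [c] := by
  induction x with
  | nil =>
    intro u w h
    cases u with
    | nil => exact ⟨[], [], rfl, rfl, by simpa using h⟩
    | cons e u => simp at h
  | cons b x ih =>
    intro u w h
    cases u with
    | nil => exact ⟨[], b :: x, rfl, rfl, by simpa using h⟩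
    | cons e u =>
      by_cases hb : b = c
      · subst hb
        rw [psi_cons_self] at h
        simp only [List.cons_append, List.cons.injEq] at h
        obtain ⟨x₁, x₂, h1, h2, h3⟩ := ih u w h.2
        exact ⟨b :: x₁, x₂, by rw [h1]; rfl, by rw [psi_cons_self, h.1, h2], h3⟩
      · rw [psi_cons_ne hb] at h
        simp only [List.cons_append, List.cons.injEq] at h
        cases u with
        | nil =>
          simp only [List.nil_append, List.cons.injEq] at h
          exact (hb h.2.1.symm).elim
        | cons e' u =>
          simp only [List.cons_append, List.cons.injEq] at h
          obtain ⟨x₁, x₂, h1, h2, h3⟩ := ih u w h.2.2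
          exact ⟨b :: x₁, x₂, by rw [h1]; rfl, by rw [psi_cons_ne hb, h.1, h.2.1, h2], h3⟩

/-- In `ψ_c(x)` every letter other than `c` is preceded by `c`. -/
lemma psi_pred {c b : α} (hb : b ≠ c) (x : List α) : ∀ u w : List α,
    u ++ b :: w = psi c x → ∃ u', u = u' ++ [c] := by
  induction x with
  | nil => intro u w h; simp at h
  | cons e x ih =>
    intro u w h
    cases u with
    | nil =>
      obtain ⟨t, ht⟩ := psi_head c (e :: x)
      rw [← h] at ht
      exact (hb (List.cons.inj ht).1).elim
    | cons e' u =>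
      by_cases he : e = c
      · subst he
        rw [psi_cons_self] at h
        simp only [List.cons_append, List.cons.injEq] at h
        obtain ⟨u', hu⟩ := ih u w h.2
        exact ⟨e' :: u', by rw [hu]; rfl⟩
      · rw [psi_cons_ne he] at h
        simp only [List.cons_append, List.cons.injEq] at h
        cases u with
        | nil => exact ⟨[], by rw [h.1]; rfl⟩
        | cons e'' u =>
          simp only [List.cons_append, List.cons.injEq] at h
          obtain ⟨u', hu⟩ := ih u w h.2.2
          exact ⟨e' :: e'' :: u', by rw [hu]; rfl⟩

lemma psi_pair {c b e : α} {x u w : List α} (h : u ++ b :: e :: w = psi c x) :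
    b = c ∨ e = c := by
  by_contra! hne
  obtain ⟨u', hu⟩ := psi_pred hne.2 x (u ++ [b]) w (by simpa using h)
  have := List.append_inj_right' hu (by simp)
  simp only [List.cons.injEq, and_true] at this
  exact hne.1 this

/-- In `ψ_c(x)c` every letter other than `c` is followed by `c`. -/
lemma psi_succ {c b : α} (hb : b ≠ c) {x u w : List α}
    (h : u ++ b :: w = psi c x ++ [c]) : ∃ w', w = c :: w' := by
  cases w with
  | nil =>
    have := List.append_inj_right' h (by simp)
    simp only [List.cons.injEq, and_true] at this
    exact (hb this).elim
  | cons e w =>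
    by_cases he : e = c
    · exact ⟨w, by rw [he]⟩
    · exfalso
      have h' : u ++ b :: e :: w = psi c (x ++ [c]) := by
        rw [psi_append, h]; simp [psi]
      rcases psi_pair h' with h | h
      · exact hb h
      · exact he h

lemma mem_psi {c b : α} {x : List α} (h : b ∈ psi c x) : b = c ∨ b ∈ x := by
  simp only [psi, List.mem_flatMap] at h
  obtain ⟨e, he, hb⟩ := h
  split_ifs at hb
  · simp at hb; exact Or.inl hb
  · simp at hb
    rcases hb with hb | hb
    · exact Or.inl hb
    · exact Or.inr (hb ▸ he)

lemma exists_concat {l : List α} (h : l ≠ []) : ∃ l' b, l = l' ++ [b] :=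
  ⟨_, _, (List.dropLast_append_getLast h).symm⟩

/-- The total weight of a word, for a given weight of each letter. -/
def wt (g : α → ℕ) (x : List α) : ℕ := (x.map g).sum

@[simp] lemma wt_nil (g : α → ℕ) : wt g [] = 0 := rfl

@[simp] lemma wt_cons (g : α → ℕ) (b : α) (x : List α) : wt g (b :: x) = g b + wt g x := by
  simp [wt]

@[simp] lemma wt_append (g : α → ℕ) (x y : List α) : wt g (x ++ y) = wt g x + wt g y := by
  simp [wt]

/-- The case of `psi_desubst` in which the factor begins and ends with the letter `c`. -/
lemma psi_desubst_aux {c : α} {x p q v y r : List α} (hv : v ≠ [])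
    (hx : p ++ (v ++ (y ++ [c])) ++ q = psi c x ++ [c])
    (hz : ∃ t, v ++ (y ++ [c]) = c :: t) (hr : v ++ (y ++ [c]) = (y ++ [c]) ++ r) :
    ∃ v' y', v' ≠ [] ∧ v' ++ y' <:+: x ∧ y' <+: v' ++ y' ∧ v = psi c v' ∧ y = psi c y' := by
  have hvy : v ++ y ≠ [] := by simp [hv]
  obtain ⟨t, ht⟩ := hz
  obtain ⟨x₁, x₂, rfl, h2, h3⟩ := psi_cut c x p (t ++ q) (by rw [← hx, ht]; simp)
  have h4 : (v ++ y) ++ c :: q = psi c x₂ ++ [c] := by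
    rw [← h3, ← List.cons_append, ← ht]; simp
  obtain ⟨x₃, x₄, rfl, h6, h7⟩ := psi_cut c x₂ _ _ h4
  have hyc : ∃ t', y ++ [c] = c :: t' := by
    cases y with
    | nil => exact ⟨[], rfl⟩
    | cons e y =>
      rw [ht] at hr
      simp only [List.cons_append, List.cons.injEq] at hr
      exact ⟨_, by rw [← hr.1]; rfl⟩
  obtain ⟨t', ht'⟩ := hyc
  obtain ⟨v', y', rfl, h9, h10⟩ := psi_cut c x₃ v t' (by rw [← ht', ← h6]; simp)
  have hy : y = psi c y' := by
    rw [← ht'] at h10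
    exact List.append_cancel_right h10
  obtain ⟨x₅, x₆, h11, h12, -⟩ := psi_cut c (v' ++ y') y r (by rw [← h6]; simpa using hr.symm)
  have : y' = x₅ := psi_injective c (hy ▸ h12)
  subst this
  refine ⟨v', y', ?_, ⟨x₁, x₄, by simp⟩, ⟨x₆, h11.symm⟩, h9, hy⟩
  rintro rfl
  exact hv (by simpa using h9)

/-- Desubstitution of periodic factors. A factor `vy` of `ψ_c(x)` with period `|v|` and `y ≠ []`
can be extended by at most one letter `c` on either side, its period being kept, to a word
`ψ_c(v'y')c` in which `v'y'` is a factor of `x` with period `|v'|`. Up to conjugation, `v` is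
`ψ_c(v')`, so the two have the same weight. -/
lemma psi_desubst {c : α} {x v y : List α} (hv : v ≠ []) (hy : y ≠ [])
    (hx : v ++ y <:+: psi c x) (hp : y <+: v ++ y) (g : α → ℕ) :
    ∃ v' y', v' ≠ [] ∧ v' ++ y' <:+: x ∧ y' <+: v' ++ y' ∧ wt g v = wt g (psi c v') ∧
      wt g y ≤ wt g (psi c y') + g c := by
  obtain ⟨p, q, hx⟩ := hx
  obtain ⟨r, hr⟩ := hp
  -- extension to the left by `c` when the factor does not begin with `c`
  obtain ⟨v₁, y₁, p₁, hv1, hy1, hx1, hr1, hh1, hw1, hw1'⟩ :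
      ∃ v₁ y₁ p₁, v₁ ≠ [] ∧ y₁ ≠ [] ∧ p₁ ++ (v₁ ++ y₁) ++ q = psi c x ∧
        y₁ ++ r = v₁ ++ y₁ ∧ (∃ t, v₁ ++ y₁ = c :: t) ∧ wt g v = wt g v₁ ∧ wt g y ≤ wt g y₁ := by
    obtain ⟨b, y0, rfl⟩ := List.exists_cons_of_ne_nil hy
    by_cases hb : b = c
    · subst hb
      exact ⟨v, b :: y0, p, hv, hy, hx, hr, ⟨_, by rw [← hr]; rfl⟩, rfl, le_rfl⟩
    · obtain ⟨u', hu'⟩ := psi_pred hb x (p ++ v) (y0 ++ q) (by rw [← hx]; simp)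
      obtain ⟨v0, rfl⟩ : ∃ v0, v = v0 ++ [c] := by
        obtain ⟨v0, e, rfl⟩ := exists_concat hv
        rw [← List.append_assoc] at hu'
        have := List.append_inj_right' hu' (by simp)
        exact ⟨v0, by rw [this]⟩
      obtain ⟨p', rfl⟩ : ∃ p', p = p' ++ [c] := by
        refine psi_pred hb x p (y0 ++ r ++ q) ?_
        rw [← hx, ← hr]; simp
      refine ⟨c :: v0, c :: b :: y0, p', by simp, by simp, by rw [← hx]; simp, ?_,
        ⟨v0 ++ c :: b :: y0, by simp⟩, by simp [add_comm], by simp⟩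
      have : (c :: b :: y0) ++ r = c :: ((b :: y0) ++ r) := rfl
      rw [this, hr]; simp
  -- extension to the right by `c` when the factor does not end with `c`
  obtain ⟨y₂, q₂, hx2, ⟨r₂, hr2⟩, hw2⟩ :
      ∃ y₂ q₂, p₁ ++ (v₁ ++ (y₂ ++ [c])) ++ q₂ = psi c x ++ [c] ∧
        (∃ r₂, v₁ ++ (y₂ ++ [c]) = (y₂ ++ [c]) ++ r₂) ∧ wt g y₁ ≤ wt g (y₂ ++ [c]) := by
    obtain ⟨y0, b, rfl⟩ := exists_concat hy1
    by_cases hb : b = c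
    · subst hb
      exact ⟨y0, q ++ [b], by rw [← hx1]; simp, ⟨r, hr1.symm⟩, le_rfl⟩
    · obtain ⟨q', hq'⟩ := psi_succ hb (x := x) (u := p₁ ++ v₁ ++ y0) (w := q ++ [c])
        (by rw [← hx1]; simp)
      obtain ⟨r', hr'⟩ := psi_succ hb (x := x) (u := p₁ ++ y0) (w := r ++ (q ++ [c]))
        (by
          rw [← hx1, ← hr1]; simp)
      have hrne : r ≠ [] := by
        rintro rfl
        have := congrArg List.length hr1
        have h0 : 0 < v₁.length := List.length_pos_of_ne_nil hv1
        simp only [List.length_append, List.length_nil] at this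
        omega
      obtain ⟨e, r0, rfl⟩ := List.exists_cons_of_ne_nil hrne
      obtain rfl : e = c := by
        simp only [List.cons_append, List.cons.injEq] at hr'
        exact hr'.1
      refine ⟨y0 ++ [b], q', ?_, ⟨r0 ++ [e], ?_⟩, by simp⟩
      · rw [← hx1, List.append_assoc _ q, hq']; simp
      · rw [← List.append_assoc v₁, ← hr1]; simp
  obtain ⟨v', y', h1, h2, h3, h4, h5⟩ :=
    psi_desubst_aux hv1 hx2 (by
      obtain ⟨t, ht⟩ := hh1
      obtain ⟨e, v0, rfl⟩ := List.exists_cons_of_ne_nil hv1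
      simp only [List.cons_append, List.cons.injEq] at ht
      exact ⟨_, by rw [← ht.1]; rfl⟩) hr2
  refine ⟨v', y', h1, h2, h3, by rw [hw1, h4], ?_⟩
  rw [← h5]
  simp only [wt_append, wt_cons, wt_nil, add_zero] at hw2
  omega

/-! ### Weights of letters along the directive word -/

open Classical in
/-- `stw f c j b` is the weight of `ψ_c^j(b)` when the letters have weights `f`. -/
noncomputable def stw (f : α → ℕ) (c : α) (j : ℕ) (b : α) : ℕ :=
  if b = c then f c else j * f c + f b

lemma stw_self (f : α → ℕ) (c : α) (j : ℕ) : stw f c j c = f c := by simp [stw]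

lemma stw_ne (f : α → ℕ) {c b : α} (h : b ≠ c) (j : ℕ) : stw f c j b = j * f c + f b := by
  simp [stw, h]

lemma stw_zero (f : α → ℕ) (c : α) : stw f c 0 = f := by
  funext b
  by_cases h : b = c
  · rw [h, stw_self]
  · rw [stw_ne f h]; omega

lemma wt_stw_psi (f : α → ℕ) (c : α) (j : ℕ) (x : List α) :
    wt (stw f c j) (psi c x) = wt (stw f c (j + 1)) x := by
  induction x with
  | nil => rfl
  | cons b x ih =>
    by_cases h : b = c
    · subst h; rw [psi_cons_self, wt_cons, wt_cons, ih, stw_self, stw_self]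
    · rw [psi_cons_ne h, wt_cons, wt_cons, wt_cons, ih, stw_self, stw_ne f h, stw_ne f h]; ring

lemma wt_stw_iterate (f : α → ℕ) (c : α) (x : List α) (p : ℕ) : ∀ j,
    wt (stw f c j) ((psi c)^[p] x) = wt (stw f c (j + p)) x := by
  induction p with
  | zero => intro j; rfl
  | succ p ih =>
    intro j
    rw [Function.iterate_succ_apply', wt_stw_psi, ih]
    congr 2; omega

/-- `lw A d n b` is the length of `μ_n(b)`, where `μ_n = ψ_{A 0}^{d_1} ⋯ ψ_{A (n-1)}^{d_n}`. -/
noncomputable def lw (A : ℕ → α) (d : ℕ → ℕ) : ℕ → α → ℕ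
  | 0 => fun _ => 1
  | n + 1 => stw (lw A d n) (A n) (d (n + 1))

/-- The length of the palindromic prefix with directive word `A 0 ^ d_1 ⋯ A (n-1) ^ d_n`. -/
noncomputable def pl (A : ℕ → α) (d : ℕ → ℕ) : ℕ → ℕ
  | 0 => 0
  | n + 1 => pl A d n + d (n + 1) * lw A d n (A n)

/-- `stg A d n r x` is the image of `x` under `ψ_{A n}^{d_{n+1}} ⋯ ψ_{A (n+r-1)}^{d_{n+r}}`. -/
noncomputable def stg (A : ℕ → α) (d : ℕ → ℕ) : ℕ → ℕ → List α → List α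
  | _, 0, x => x
  | n, r + 1, x => (psi (A n))^[d (n + 1)] (stg A d (n + 1) r x)

section Weights

variable {A : ℕ → α} {d : ℕ → ℕ} {k : ℕ}

lemma exists_rep (hA : ∀ i j, A i = A j ↔ i % k = j % k) (hk : 2 ≤ k) (n i : ℕ) :
    ∃ j, j < k ∧ A i = A (n + j) := by
  refine ⟨(i + n * (k - 1)) % k, Nat.mod_lt _ (by omega), ?_⟩
  rw [hA, Nat.add_mod_mod]
  obtain ⟨k, rfl⟩ : ∃ k', k = k' + 1 := ⟨k - 1, by omega⟩
  have : n + (i + n * (k + 1 - 1)) = i + (k + 1) * n := by simp; ring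
  rw [this, Nat.add_mul_mod_self_left]

lemma rep_ne (hA : ∀ i j, A i = A j ↔ i % k = j % k) {n j : ℕ} (h0 : 1 ≤ j) (hj : j < k) :
    A (n + j) ≠ A n := by
  rw [Ne, hA]
  intro h
  have h1 : n + j ≡ n + 0 [MOD k] := h
  have h2 := Nat.ModEq.add_left_cancel' n h1
  rw [Nat.ModEq, Nat.mod_eq_of_lt hj, Nat.zero_mod] at h2
  omega

lemma lw_succ_self (n : ℕ) : lw A d (n + 1) (A n) = lw A d n (A n) := stw_self _ _ _

lemma lw_succ_ne {n : ℕ} {b : α} (h : b ≠ A n) :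
    lw A d (n + 1) b = d (n + 1) * lw A d n (A n) + lw A d n b := stw_ne _ h _

/-- The images under `μ_n` of `A n, A (n+1), …, A (n+k-1)` have non-increasing lengths. -/
lemma lw_anti (hA : ∀ i j, A i = A j ↔ i % k = j % k) (hd : ∀ i, 1 ≤ i → 1 ≤ d i)
    (n : ℕ) : ∀ i j, i ≤ j → j < k → lw A d n (A (n + j)) ≤ lw A d n (A (n + i)) := by
  induction n with
  | zero => intro i j _ _; exact le_rfl
  | succ n ih =>
    intro i j hij hj
    rcases Nat.lt_or_ge (i + 1) k with hi | hi
    · rw [show n + 1 + i = n + (i + 1) by ring, show n + 1 + j = n + (j + 1) by ring,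
        lw_succ_ne (rep_ne hA (by omega) hi)]
      rcases Nat.lt_or_ge (j + 1) k with hj' | hj'
      · rw [lw_succ_ne (rep_ne hA (by omega) hj')]
        exact Nat.add_le_add_left (ih _ _ (by omega) hj') _
      · have : A (n + (j + 1)) = A n := by
          rw [hA, show n + (j + 1) = n + k by omega, Nat.add_mod_right]
        rw [this, lw_succ_self]
        have := Nat.le_mul_of_pos_left (lw A d n (A n)) (hd (n + 1) (by omega))
        omega
    · obtain rfl : i = j := by omega
      exact le_rfl

lemma lw_le (hA : ∀ i j, A i = A j ↔ i % k = j % k) (hk : 2 ≤ k) (hd : ∀ i, 1 ≤ i → 1 ≤ d i)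
    (n i : ℕ) : lw A d n (A i) ≤ lw A d n (A n) := by
  obtain ⟨j, hj, h⟩ := exists_rep hA hk n i
  rw [h]
  exact lw_anti hA hd n 0 j (by omega) hj

lemma lw_head_succ (hA : ∀ i j, A i = A j ↔ i % k = j % k) (hk : 2 ≤ k) (n : ℕ) :
    lw A d (n + 1) (A (n + 1)) = d (n + 1) * lw A d n (A n) + lw A d n (A (n + 1)) :=
  lw_succ_ne (rep_ne hA (by omega) (by omega))

lemma lw_head_mono (hA : ∀ i j, A i = A j ↔ i % k = j % k) (hk : 2 ≤ k)
    (hd : ∀ i, 1 ≤ i → 1 ≤ d i) : Monotone fun n => lw A d n (A n) := by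
  refine monotone_nat_of_le_succ fun n => ?_
  rw [lw_head_succ hA hk]
  have := Nat.le_mul_of_pos_left (lw A d n (A n)) (hd (n + 1) (by omega))
  omega

/-- The total loss of the descent down to level `n` is less than `|s_n| + |μ_n(b)|`, for every
letter `b`. -/
lemma pl_lt (hA : ∀ i j, A i = A j ↔ i % k = j % k) (hk : 2 ≤ k) (hd : ∀ i, 1 ≤ i → 1 ≤ d i)
    (n : ℕ) : ∀ i, pl A d n < lw A d n (A n) + lw A d n (A i) := by
  induction n with
  | zero => intro i; simp [pl, lw]
  | succ n ih =>
    intro i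
    have h1 := ih (n + 1)
    have h2 : lw A d n (A n) ≤ lw A d (n + 1) (A i) := by
      by_cases h : A i = A n
      · rw [h, lw_succ_self]
      · rw [lw_succ_ne h]
        have := Nat.le_mul_of_pos_left (lw A d n (A n)) (hd (n + 1) (by omega))
        omega
    rw [lw_head_succ hA hk, pl]
    omega

end Weights

/-! ### Descent of squares -/

/-- The invariant of the descent: `x` has a factor `vy` with period `|v|` such that `v` has weight
`m` and the weight of `y`, increased by `P`, is at least `m`. A square of length `2m` is the case
`P = 0`. -/
def Inv (m : ℕ) (g : α → ℕ) (P : ℕ) (x : List α) : Prop :=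
  ∃ v y, v ≠ [] ∧ v ++ y <:+: x ∧ y <+: v ++ y ∧ wt g v = m ∧ m ≤ wt g y + P

/-- One step of the descent. It can fail only if `y = []`, in which case `m ≤ P`. -/
lemma inv_step {m P j : ℕ} {f : α → ℕ} {c : α} {x : List α} (h : Inv m (stw f c j) P (psi c x)) :
    Inv m (stw f c (j + 1)) (P + f c) x ∨
      (m ≤ P ∧ ∃ v, v <:+: psi c x ∧ wt (stw f c j) v = m) := by
  obtain ⟨v, y, hv, hx, hp, hm, hy⟩ := h
  by_cases h0 : y = []
  · subst h0
    exact Or.inr ⟨by simpa using hy, v, by simpa using hx, hm⟩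
  · obtain ⟨v', y', h1, h2, h3, h4, h5⟩ := psi_desubst hv h0 hx hp (stw f c j)
    rw [wt_stw_psi] at h4 h5
    rw [stw_self] at h5
    exact Or.inl ⟨v', y', h1, h2, h3, by rw [← h4, hm], by omega⟩

lemma mem_iterate_psi {c b : α} {x : List α} (p : ℕ) (h : b ∈ (psi c)^[p] x) :
    b = c ∨ b ∈ x := by
  induction p with
  | zero => exact Or.inr h
  | succ p ih =>
    rw [Function.iterate_succ_apply'] at h
    rcases mem_psi h with h | h
    · exact Or.inl h
    · exact ih h

/-- `p` steps of the descent with the same letter `c`: either all of them succeed, or the descent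
stops after reaching some weight `stw f c i`, where the period word `v` lies in a word `ψ_c(x')`. -/
lemma inv_iterate {m P : ℕ} {f : α → ℕ} {c : α} {x : List α} (p : ℕ) : ∀ j,
    Inv m (stw f c j) (P + j * f c) ((psi c)^[p] x) →
    Inv m (stw f c (j + p)) (P + (j + p) * f c) x ∨
      ∃ i, i < j + p ∧ m ≤ P + i * f c ∧ ∃ v x', v <:+: psi c x' ∧ wt (stw f c i) v = m ∧
        ∀ b ∈ v, b = c ∨ b ∈ x := by
  induction p with
  | zero => intro j h; exact Or.inl h
  | succ p ih =>
    intro j h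
    have h' := h
    rw [Function.iterate_succ_apply'] at h
    rcases inv_step h with h | ⟨h1, v, h2, h3⟩
    · have e : P + j * f c + f c = P + (j + 1) * f c := by ring
      rw [e] at h
      rcases ih _ h with h | ⟨i, h1, h2⟩
      · left
        rwa [show j + (p + 1) = j + 1 + p by ring]
      · exact Or.inr ⟨i, by omega, h2⟩
    · refine Or.inr ⟨j, by omega, h1, v, _, h2, h3, fun b hb => ?_⟩
      rw [← Function.iterate_succ_apply' (psi c)] at h2
      exact mem_iterate_psi _ (h2.subset hb)

lemma eq_or_first_ne (c : α) (l : List α) : (∀ b ∈ l, b = c) ∨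
    ∃ p b l', b ≠ c ∧ l = List.replicate p c ++ b :: l' := by
  induction l with
  | nil => left; simp
  | cons e l ih =>
    by_cases he : e = c
    · subst he
      rcases ih with ih | ⟨p, b, l', h1, rfl⟩
      · left; simpa using ih
      · exact Or.inr ⟨p + 1, b, l', h1, by simp [List.replicate_succ]⟩
    · exact Or.inr ⟨0, e, l, he, rfl⟩

lemma wt_const {c : α} (g : α → ℕ) : ∀ l : List α, (∀ b ∈ l, b = c) → wt g l = l.length * g c := by
  intro l h
  rw [List.eq_replicate_of_mem h]
  simp [wt]

/-- A factor of `ψ_c(x)` containing two letters other than `c` also contains a `c` between them, so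
a factor too light for that has at most one letter other than `c`. -/
lemma light_word {m P i : ℕ} {f : α → ℕ} {c : α} {x v : List α} (hv : v <:+: psi c x)
    (hm : wt (stw f c i) v = m) (hmP : m ≤ P + i * f c)
    (hP : ∀ b ∈ v, P < f c + f b) :
    (∃ r, m = r * f c) ∨ ∃ r, ∃ b ∈ v, b ≠ c ∧ m = r * f c + f b := by
  rcases eq_or_first_ne c v with h | ⟨p, b, v₂, hb, rfl⟩
  · left
    rw [wt_const _ v h, stw_self] at hm
    exact ⟨_, hm.symm⟩
  · right
    have hrep : wt (stw f c i) (List.replicate p c) = p * f c := by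
      rw [wt_const (c := c) _ _ (by simp), stw_self]; simp
    rcases eq_or_first_ne c v₂ with h | ⟨q, e, v₃, he, rfl⟩
    · refine ⟨p + i + v₂.length, b, by simp, hb, ?_⟩
      rw [wt_append, wt_cons, wt_const _ v₂ h, stw_self, hrep, stw_ne f hb] at hm
      rw [← hm]; ring
    · exfalso
      have hrep' : wt (stw f c i) (List.replicate q c) = q * f c := by
        rw [wt_const (c := c) _ _ (by simp), stw_self]; simp
      have hq : 1 ≤ q := by
        by_contra! hq
        obtain rfl : q = 0 := by omega
        obtain ⟨u, w, h⟩ := hv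
        rcases psi_pair (c := c) (b := b) (e := e) (x := x) (u := u ++ List.replicate p c)
          (w := v₃ ++ w) (by rw [← h]; simp) with h | h
        · exact hb h
        · exact he h
      have h1 := hP b (by simp)
      rw [wt_append, wt_cons, wt_append, wt_cons, hrep, hrep', stw_ne f hb, stw_ne f he] at hm
      have h2 : f c ≤ q * f c := Nat.le_mul_of_pos_left _ hq
      omega

section Descent

variable {A : ℕ → α} {d : ℕ → ℕ} {k : ℕ}

lemma mem_stg {b : α} {x : List α} (hx : ∀ b ∈ x, ∃ i, b = A i) (r : ℕ) : ∀ n,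
    b ∈ stg A d n r x → ∃ i, b = A i := by
  induction r with
  | zero => intro n h; exact hx b h
  | succ r ih =>
    intro n h
    rw [stg] at h
    rcases mem_iterate_psi _ h with h | h
    · exact ⟨n, h⟩
    · exact ih _ h

/-- The descent does not stop before level `n`, since the loss up to there is less than `|s_n|`. -/
lemma inv_level (hA : ∀ i j, A i = A j ↔ i % k = j % k) (hk : 2 ≤ k)
    (hd : ∀ i, 1 ≤ i → 1 ≤ d i) {m n N : ℕ} {x : List α} (hnN : n ≤ N)
    (h1 : lw A d n (A n) ≤ m) (h0 : Inv m (lw A d 0) (pl A d 0) (stg A d 0 N x)) :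
    ∀ i, i ≤ n → Inv m (lw A d i) (pl A d i) (stg A d i (N - i) x) := by
  intro i
  induction i with
  | zero => intro _; exact h0
  | succ i ih =>
    intro hi
    have h := ih (by omega)
    rw [show N - i = N - (i + 1) + 1 by omega, stg, ← stw_zero (lw A d i) (A i)] at h
    rcases inv_iterate (P := pl A d i) (d (i + 1)) 0 (by simpa using h) with
      h | ⟨j, hj, hmj, -⟩
    · simpa [lw, pl] using h
    · exfalso
      have h3 := pl_lt hA hk hd (i + 1) i
      have h4 := lw_head_mono hA hk hd hi
      rw [lw_succ_self, pl] at h3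
      simp only at h4
      have h5 : (j + 1) * lw A d i (A i) ≤ d (i + 1) * lw A d i (A i) :=
        Nat.mul_le_mul_right _ (by omega)
      rw [add_mul] at h5
      omega

/-- A square of period `m` in `μ_N(x)` with `|s_n| ≤ m < |s_{n+1}|` has the length of
`μ_n(c^r)` or `μ_n(c^r b)`, where `c = A n` and `b` is a letter other than `c`. -/
lemma square_length (hA : ∀ i j, A i = A j ↔ i % k = j % k) (hk : 2 ≤ k)
    (hd : ∀ i, 1 ≤ i → 1 ≤ d i) {m n N : ℕ} {w x : List α} (hnN : n + 2 ≤ N) (hm : 1 ≤ m)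
    (h1 : lw A d n (A n) ≤ m) (h2 : m < lw A d (n + 1) (A (n + 1)))
    (hx : ∀ b ∈ x, ∃ i, b = A i) (hw : w.length = m) (hww : w ++ w <:+: stg A d 0 N x) :
    (∃ r, m = r * lw A d n (A n)) ∨
      ∃ r i, A i ≠ A n ∧ m = r * lw A d n (A n) + lw A d n (A i) := by
  have hwt : wt (lw A d 0) w = m := by rw [← hw]; simp [wt, lw]
  have h0 : Inv m (lw A d 0) (pl A d 0) (stg A d 0 N x) := by
    refine ⟨w, w, ?_, hww, List.prefix_append _ _, hwt, by omega⟩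
    rintro rfl
    simp at hw
    omega
  have h := inv_level hA hk hd (by omega) h1 h0 n le_rfl
  obtain ⟨t, rfl⟩ : ∃ t, N = n + 2 + t := ⟨N - (n + 2), by omega⟩
  rw [show n + 2 + t - n = t + 1 + 1 by omega, stg, ← stw_zero (lw A d n) (A n)] at h
  rcases inv_iterate (P := pl A d n) (d (n + 1)) 0 (by simpa using h) with
    h | ⟨j, -, hmj, v, x', hv, hvm, hmem⟩
  -- at level `n + 1` the separating letter `A (n + 1)` is too heavy to occur in `v`
  · obtain ⟨v, y, hv, hvx, -, hvm, -⟩ := h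
    rw [zero_add] at hvm
    change wt (lw A d (n + 1)) v = m at hvm
    have hvx := (List.prefix_append v y).isInfix.trans hvx
    have hne : ∀ b ∈ v, b ≠ A (n + 1) := by
      rintro b hb rfl
      have := List.single_le_sum (l := v.map (lw A d (n + 1))) (by simp) _
        (List.mem_map_of_mem hb)
      change _ ≤ wt (lw A d (n + 1)) v at this
      omega
    have hmem : ∀ b ∈ v, ∃ i, b = A i := fun b hb => mem_stg hx _ _ (hvx.subset hb)
    obtain ⟨p, hp⟩ : ∃ p, d (n + 1 + 1) = p + 1 :=
      ⟨d (n + 1 + 1) - 1, by have := hd (n + 1 + 1) (by omega); omega⟩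
    rw [stg, hp, Function.iterate_succ_apply'] at hvx
    obtain ⟨b, v, rfl⟩ := List.exists_cons_of_ne_nil hv
    cases v with
    | cons e v =>
      exfalso
      obtain ⟨u, u', hu⟩ := hvx
      rcases psi_pair (c := A (n + 1)) (b := b) (e := e) (u := u) (w := v ++ u')
        (by rw [← hu]; simp) with h | h
      · exact hne b (by simp) h
      · exact hne e (by simp) h
    | nil =>
      obtain ⟨i, rfl⟩ := hmem b (by simp)
      simp only [wt_cons, wt_nil, add_zero] at hvm
      by_cases hi : A i = A n
      · rw [hi, lw_succ_self] at hvm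
        exact Or.inl ⟨1, by omega⟩
      · rw [lw_succ_ne hi] at hvm
        exact Or.inr ⟨_, i, hi, hvm.symm⟩
  · have hmem' : ∀ b ∈ v, ∃ i, b = A i := by
      intro b hb
      rcases hmem b hb with h | h
      · exact ⟨n, h⟩
      · exact mem_stg hx _ _ h
    rcases light_word hv hvm hmj (by
      intro b hb
      obtain ⟨i, rfl⟩ := hmem' b hb
      exact pl_lt hA hk hd n i) with h | ⟨r, b, hb, hbn, h⟩
    · exact Or.inl h
    · obtain ⟨i, rfl⟩ := hmem' b hb
      exact Or.inr ⟨r, i, hbn, h⟩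

end Descent

/-! ### The words `s_n` as morphic images of letters -/

lemma iterate_psi_append (c : α) (x y : List α) (p : ℕ) :
    (psi c)^[p] (x ++ y) = (psi c)^[p] x ++ (psi c)^[p] y := by
  induction p with
  | zero => rfl
  | succ p ih => simp only [Function.iterate_succ_apply', ih, psi_append]

lemma iterate_psi_self (c : α) (p : ℕ) : (psi c)^[p] [c] = [c] := by
  induction p with
  | zero => rfl
  | succ p ih => rw [Function.iterate_succ_apply', ih, psi_cons_self, psi_nil]

lemma iterate_psi_ne {c b : α} (h : b ≠ c) (p : ℕ) :
    (psi c)^[p] [b] = List.replicate p c ++ [b] := by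
  induction p with
  | zero => rfl
  | succ p ih =>
    rw [Function.iterate_succ_apply, psi_cons_ne h, psi_nil, ← List.singleton_append,
      iterate_psi_append, iterate_psi_self, ih]
    simp [List.replicate_succ]

section Stages

variable {A : ℕ → α} {d : ℕ → ℕ}

lemma stg_succ_right (r : ℕ) : ∀ (n : ℕ) (x : List α),
    stg A d n (r + 1) x = stg A d n r ((psi (A (n + r)))^[d (n + r + 1)] x) := by
  induction r with
  | zero => intro n x; rfl
  | succ r ih =>
    intro n x
    rw [stg, ih, stg, show n + 1 + r = n + (r + 1) by ring]

lemma stg_append (r : ℕ) : ∀ (n : ℕ) (x y : List α),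
    stg A d n r (x ++ y) = stg A d n r x ++ stg A d n r y := by
  induction r with
  | zero => intro n x y; rfl
  | succ r ih => intro n x y; rw [stg, stg, stg, ih, iterate_psi_append]

lemma stg_nil (n r : ℕ) : stg A d n r [] = [] := by
  have := stg_append (A := A) (d := d) r n [] []
  simpa using this

lemma stg_replicate (n r p : ℕ) (c : α) :
    stg A d n r (List.replicate p c) = pw (stg A d n r [c]) p := by
  induction p with
  | zero => exact stg_nil n r
  | succ p ih => rw [List.replicate_succ, ← List.singleton_append, stg_append, ih, pw]

lemma stg_succ_self (n : ℕ) : stg A d 0 (n + 1) [A n] = stg A d 0 n [A n] := by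
  rw [stg_succ_right, zero_add, iterate_psi_self]

lemma stg_succ_ne {n : ℕ} {b : α} (h : b ≠ A n) :
    stg A d 0 (n + 1) [b] = pw (stg A d 0 n [A n]) (d (n + 1)) ++ stg A d 0 n [b] := by
  rw [stg_succ_right, zero_add, iterate_psi_ne h, stg_append, stg_replicate]

lemma length_stg (n : ℕ) : ∀ x : List α, (stg A d 0 n x).length = wt (lw A d n) x := by
  induction n with
  | zero => intro x; simp [stg, wt, lw]
  | succ n ih =>
    intro x
    rw [stg_succ_right, ih, zero_add, ← stw_zero (lw A d n) (A n), wt_stw_iterate, zero_add]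
    rfl

end Stages

section Words

variable {k : ℕ} {a : ℕ → α} {d : ℕ → ℕ}

/-- `pr k a d n q` is the product `s_{n-1}^{d_n} s_{n-2}^{d_{n-1}} ⋯` with `q` factors. -/
def pr (k : ℕ) (a : ℕ → α) (d : ℕ → ℕ) (n q : ℕ) : List α :=
  ((List.range q).map (fun j => pw (S k a d (n + k - 2 - j)) (d (n - j)))).flatten

lemma pr_succ (n q : ℕ) : pr k a d (n + 1) (q + 1) =
    pw (S k a d (n + k - 1)) (d (n + 1)) ++ pr k a d n q := by
  rw [pr, List.range_succ_eq_map, List.map_cons, List.flatten_cons, List.map_map, pr]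
  congr 2
  · congr 1; omega
  · refine congrArg (fun f => List.map f (List.range q)) (funext fun j => ?_)
    simp only [Function.comp, Nat.succ_eq_add_one]
    rw [show n + 1 + k - 2 - (j + 1) = n + k - 2 - j by omega,
      show n + 1 - (j + 1) = n - j by omega]

lemma pr_zero (hd0 : d 0 = 0) (q : ℕ) : pr k a d 0 q = [] := by
  simp [pr, hd0, pw]

lemma length_pw (w : List α) (p : ℕ) : (pw w p).length = p * w.length := by
  induction p with
  | zero => simp [pw]
  | succ p ih => rw [pw, List.length_append, ih]; ring

lemma length_pr (n q : ℕ) : (pr k a d n q).length =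
    ∑ j ∈ Finset.Icc 1 q, d (n + 1 - j) * (S k a d (n + k - 1 - j)).length := by
  induction q with
  | zero => simp [pr]
  | succ q ih =>
    rw [Finset.sum_Icc_succ_top (by omega), ← ih, pr, List.range_succ, List.map_append,
      List.flatten_append, List.length_append, pr]
    congr 1
    rw [List.map_singleton, List.flatten_singleton, length_pw,
      show n + k - 2 - q = n + k - 1 - (q + 1) by omega,
      show n - q = n + 1 - (q + 1) by omega]

lemma S_base {m : ℕ} (h : m < k) : S k a d m = [a ((m + 1) % k + 1)] := by
  rw [S, dif_pos (by omega)]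

lemma S_step (hk : 2 ≤ k) (n : ℕ) :
    S k a d (n + k) = pr k a d (n + 1) (k - 1) ++ S k a d n := by
  rw [S, dif_neg (by omega), show n + k - max k 1 = n by omega, pr]
  congr 3
  funext j
  rw [show n + k - 1 - j = n + 1 + k - 2 - j by omega,
    show n + k + 1 - k - j = n + 1 - j by omega]

/-- The images of the letters under `μ_n`: the letter `A n` gives `s_n`, the other letters give the
words `s_{n-1}^{d_n} ⋯ s_{n+2-i}^{d_{n+3-i}} s_{n+1-i}`, `2 ≤ i ≤ k`. -/
lemma stg_letters (hk : 2 ≤ k) (hd0 : d 0 = 0) {A : ℕ → α}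
    (hAa : ∀ n, A n = a (n % k + 1)) (hA : ∀ i j, A i = A j ↔ i % k = j % k) (n : ℕ) :
    stg A d 0 n [A n] = S k a d (n + k - 1) ∧
    ∀ i, 2 ≤ i → i ≤ k →
      stg A d 0 n [A (n + k + 1 - i)] = pr k a d n (i - 2) ++ S k a d (n + k - i) := by
  induction n with
  | zero =>
    constructor
    · rw [S_base (by omega), stg, hAa, show 0 + k - 1 + 1 = k by omega]
      simp
    · intro i h2 hi
      rw [S_base (by omega), stg, hAa, pr_zero hd0, List.nil_append,
        show 0 + k + 1 - i = 0 + k - i + 1 by omega]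
  | succ n ih =>
    obtain ⟨ih1, ih2⟩ := ih
    constructor
    · have h := ih2 k hk le_rfl
      rw [show n + k + 1 - k = n + 1 by omega, show n + k - k = n by omega] at h
      rw [stg_succ_ne (rep_ne hA le_rfl (by omega)), ih1, h,
        show n + 1 + k - 1 = n + k by omega, S_step hk, show k - 1 = k - 2 + 1 by omega, pr_succ,
        List.append_assoc]
    · intro i h2 hi
      rcases Nat.eq_or_lt_of_le h2 with rfl | h3
      · have : A (n + 1 + k + 1 - 2) = A n := by
          rw [hA, show n + 1 + k + 1 - 2 = n + k by omega, Nat.add_mod_right]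
        rw [this, stg_succ_self, ih1, show n + 1 + k - 2 = n + k - 1 by omega]
        simp [pr]
      · have hne : A (n + 1 + k + 1 - i) ≠ A n := by
          rw [show n + 1 + k + 1 - i = n + (k + 2 - i) by omega]
          exact rep_ne hA (by omega) (by omega)
        have h := ih2 (i - 1) (by omega) (by omega)
        rw [show n + k + 1 - (i - 1) = n + 1 + k + 1 - i by omega,
          show n + k - (i - 1) = n + 1 + k - i by omega] at h
        rw [stg_succ_ne hne, ih1, h, show i - 2 = i - 1 - 2 + 1 by omega, pr_succ,
          List.append_assoc]

lemma s_prefix_succ (hk : 2 ≤ k) (hd : ∀ i, 1 ≤ i → 1 ≤ d i) (n : ℕ) :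
    s k a d n <+: s k a d (n + 1) := by
  obtain ⟨p, hp⟩ : ∃ p, d (n + 1) = p + 1 :=
    ⟨d (n + 1) - 1, by have := hd (n + 1) (by omega); omega⟩
  rw [s, s, show n + 1 + (k - 1) = n + k by omega, S_step hk, show k - 1 = k - 2 + 1 by omega,
    pr_succ, hp, pw, show n + (k - 2 + 1) = n + k - 1 by omega]
  simp only [List.append_assoc]
  exact List.prefix_append _ _

lemma factorS_large (hk : 2 ≤ k) (hd : ∀ i, 1 ≤ i → 1 ≤ d i) {w : List α} (h : FactorS k a d w)
    (N : ℕ) : ∃ M, N ≤ M ∧ w <:+: s k a d M := by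
  obtain ⟨M, hM⟩ := h
  have : ∀ t, w <:+: s k a d (M + t) := by
    intro t
    induction t with
    | zero => exact hM
    | succ t ih => exact ih.trans (s_prefix_succ hk hd (M + t)).isInfix
  exact ⟨M + N, by omega, this N⟩

end Words

theorem stmt15 {α : Type*} (k : ℕ) (hk : 2 ≤ k) (a : ℕ → α)
    (ha : ∀ i j, 1 ≤ i → i ≤ k → 1 ≤ j → j ≤ k → a i = a j → i = j)
    (d : ℕ → ℕ) (hd0 : d 0 = 0) (hd : ∀ i, 1 ≤ i → 1 ≤ d i) (m n : ℕ) (hm : 1 ≤ m) (hn : 1 ≤ n)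
    (h1 : (s k a d n).length ≤ m) (h2 : m < (s k a d (n + 1)).length)
    (hD1 : ¬∃ r, 1 ≤ r ∧ r ≤ d (n + 1) ∧ m = r * (s k a d n).length)
    (hDi : ¬∃ i r, 2 ≤ i ∧ i ≤ k - 1 ∧ 1 ≤ r ∧ r ≤ d (n + 1) ∧
        m = r * (s k a d n).length +
          (∑ j ∈ Finset.Icc 1 (i - 2),
            d (n + 1 - j) * (S k a d (n + k - 1 - j)).length) +
          (S k a d (n + k - i)).length)
    (hDk : ¬∃ r, 1 ≤ r ∧ r ≤ d (n + 1) - 1 ∧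
        m = r * (s k a d n).length +
          (∑ j ∈ Finset.Icc 1 (k - 2),
            d (n + 1 - j) * (S k a d (n + k - 1 - j)).length) +
          (S k a d n).length) :
    ∀ l, 2 ≤ l → ∀ w : List α, w.length = m → ¬ FactorS k a d (pw w l) := by
  intro l hl w hw hfac
  let A : ℕ → α := fun i => a (i % k + 1)
  have hA : ∀ i j, A i = A j ↔ i % k = j % k := by
    intro i j
    have hi := Nat.mod_lt i (show 0 < k by omega)
    have hj := Nat.mod_lt j (show 0 < k by omega)
    refine ⟨fun h => ?_, fun h => by simp only [A, h]⟩
    have := ha _ _ (by omega) (by omega) (by omega) (by omega) h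
    omega
  have hlet := fun n => stg_letters hk hd0 (A := A) (fun _ => rfl) hA n
  have hs : ∀ n, stg A d 0 n [A n] = s k a d n := by
    intro n
    rw [(hlet n).1, s, show n + k - 1 = n + (k - 1) by omega]
  have hlen : ∀ n, (s k a d n).length = lw A d n (A n) := by
    intro n
    rw [← hs, length_stg]; simp
  obtain ⟨M, hM, hwM⟩ := factorS_large hk hd hfac (n + 2)
  obtain ⟨l, rfl⟩ : ∃ l', l = l' + 2 := ⟨l - 2, by omega⟩
  have hww : w ++ w <:+: stg A d 0 M [A M] := by
    rw [hs]
    refine List.IsInfix.trans ?_ hwM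
    rw [pw, pw, ← List.append_assoc]
    exact (List.prefix_append _ _).isInfix
  rw [hlen] at h1 h2 hD1 hDi hDk
  have hF := lw_head_succ (d := d) hA hk n
  have hle := lw_le hA hk hd n (n + 1)
  have hr1 : ∀ r, 1 ≤ r → m ≠ r * lw A d n (A n) := by
    intro r hr hmr
    refine hD1 ⟨r, hr, ?_, hmr⟩
    have : r * lw A d n (A n) < (d (n + 1) + 1) * lw A d n (A n) := by
      rw [add_mul]; omega
    have := Nat.lt_of_mul_lt_mul_right this
    omega
  rcases square_length hA hk hd hM hm h1 h2
    (by intro b hb; exact ⟨M, by simpa using hb⟩) hw hww with ⟨r, hr⟩ | ⟨r, i, hi, hr⟩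
  · refine hr1 r ?_ hr
    rcases Nat.eq_zero_or_pos r with rfl | h
    · omega
    · exact h
  · rcases Nat.eq_zero_or_pos r with rfl | hr0
    -- a single letter other than `A n`: its image is no longer than `s_n`
    · have := lw_le hA hk hd n i
      exact hr1 1 le_rfl (by omega)
    obtain ⟨j, hj, hij⟩ := exists_rep hA hk n i
    rw [hij] at hi hr
    have hj0 : 1 ≤ j := by
      rcases Nat.eq_zero_or_pos j with rfl | h
      · exact (hi rfl).elim
      · exact h
    have hw : lw A d n (A (n + j)) =
        (∑ e ∈ Finset.Icc 1 (k + 1 - j - 2), d (n + 1 - e) * (S k a d (n + k - 1 - e)).length) +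
          (S k a d (n + k - (k + 1 - j))).length := by
      have h := (hlet n).2 (k + 1 - j) (by omega) (by omega)
      rw [show n + k + 1 - (k + 1 - j) = n + j by omega] at h
      have h' := congrArg List.length h
      rw [length_stg, List.length_append, length_pr] at h'
      simpa using h'
    rcases Nat.eq_or_lt_of_le hj0 with rfl | hj1
    · have hrd : r < d (n + 1) :=
        Nat.lt_of_mul_lt_mul_right (a := lw A d n (A n)) (by omega)
      refine hDk ⟨r, hr0, by omega, ?_⟩
      rw [show k + 1 - 1 - 2 = k - 2 by omega, show n + k - (k + 1 - 1) = n by omega] at hw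
      rw [hr, hw, add_assoc]
    · have hrd : r < d (n + 1) + 1 :=
        Nat.lt_of_mul_lt_mul_right (a := lw A d n (A n)) (by rw [add_mul]; omega)
      refine hDi ⟨k + 1 - j, r, by omega, by omega, hr0, by omega, ?_⟩
      rw [hr, hw, add_assoc]

end Epi
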